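/- Let R be a finite valuation ring of order q^r with q odd, and let A ⊆ R be a subset with |A|^3 ≥ q^{3r−1} (equivalently |A| ≥ q^{r−1/3}). Then max{|A−A|, |A·A + A·A|} ≥ 2^{−1/3}·|A|^{2/3}·q^{r/3}. -/

import Mathlib

open Finset Pointwise

/-!
Fix a primitive additive character `ψ` of `R`. Every triple `(b, e, a) ∈ A³` writes `b * e` as
`b * (d + a)` with `d = e - a ∈ A - A`, so the equation `p = b * (d + a) + b' * (d' + a')` with
`p ∈ A * A + A * A` and `d, d' ∈ A - A` has at least `|A|⁶` solutions. Expanding the number of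
solutions in the characters `x ↦ ψ (u * x)`, the term `u = 0` is `|A * A + A * A| |A - A|² |A|⁴`
and, by Parseval and Cauchy–Schwarz, the others are controlled by
`E = ∑ u ≠ 0, |ann u|⁴`.

To bound `E`, let `z` generate the maximal ideal. The ideals of `R` form a chain, so
`|ann (z * v)| = q |ann v|` unless `z * v = 0`, and `v ↦ z * v` is `q`-to-one onto its image. This
gives `q³ E ≤ E + |R|⁴`, which suffices as soon as `q ≥ 9`; for `q ≤ 8` the bound `|A| ≤ |A - A|`
is already enough.
-/

section ExponentialSums

open scoped ComplexConjugate

variable {R : Type*} [CommRing R] {ι κ : Type*}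

/-- The exponential sum of the finite family `f` over `s` at the frequency `u`, i.e. the Fourier
transform at `u` of the push-forward under `f` of the counting measure on `s`. -/
def expSum (ψ : AddChar R ℂ) (s : Finset ι) (f : ι → R) (u : R) : ℂ :=
  ∑ i ∈ s, ψ (u * f i)

variable (ψ : AddChar R ℂ) (s : Finset ι) (f : ι → R)

lemma expSum_zero : expSum ψ s f 0 = #s := by
  simp [expSum]

lemma expSum_mul_expSum (t : Finset κ) (g : κ → R) (u : R) :
    expSum ψ s f u * expSum ψ t g u = expSum ψ (s ×ˢ t) (fun x ↦ f x.1 + g x.2) u := by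
  simp only [expSum, sum_mul_sum, sum_product, mul_add, AddChar.map_add_eq_mul]

lemma expSum_mul_add (B C D : Finset R) (u : R) :
    expSum ψ (B ×ˢ C ×ˢ D) (fun t ↦ t.1 * (t.2.1 + t.2.2)) u =
      ∑ b ∈ B, expSum ψ C (u * ·) b * expSum ψ D (u * ·) b := by
  simp_rw [expSum_mul_expSum]
  simp only [expSum, sum_product, ← mul_add, mul_left_comm]

lemma conj_expSum [Finite R] (u : R) : conj (expSum ψ s f u) = expSum ψ s (fun i ↦ -f i) u := by
  simp only [expSum, map_sum, mul_neg, AddChar.map_neg_eq_conj]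

variable [Fintype R] {ψ}

lemma sum_expSum [DecidableEq R] (hψ : ψ.IsPrimitive) :
    ∑ u, expSum ψ s f u = Fintype.card R * #{i ∈ s | f i = 0} := by
  simp only [expSum]
  rw [sum_comm]
  simp only [AddChar.sum_mulShift _ hψ, Nat.cast_ite, Nat.cast_zero]
  rw [← sum_filter, sum_const, nsmul_eq_mul, mul_comm]

lemma sum_norm_expSum_sq [DecidableEq R] (hψ : ψ.IsPrimitive) :
    ∑ u, ‖expSum ψ s f u‖ ^ 2 = Fintype.card R * #{x ∈ s ×ˢ s | f x.1 = f x.2} := by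
  have h : ∑ u, expSum ψ s f u * conj (expSum ψ s f u) =
      Fintype.card R * #{x ∈ s ×ˢ s | f x.1 = f x.2} := by
    simp only [conj_expSum, expSum_mul_expSum, sum_expSum _ _ hψ, ← sub_eq_add_neg, sub_eq_zero]
  simp only [Complex.mul_conj'] at h
  exact_mod_cast h

lemma sum_norm_expSum_id_sq (hψ : ψ.IsPrimitive) (X : Finset R) :
    ∑ u, ‖expSum ψ X id u‖ ^ 2 = Fintype.card R * #X := by
  classical
  have hdiag : {x ∈ X ×ˢ X | id x.1 = id x.2} = X.diag := by
    ext ⟨x, y⟩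
    simp only [id, mem_filter, mem_product, mem_diag]
    grind
  rw [sum_norm_expSum_sq X id hψ, hdiag, diag_card]

lemma card_mul_card_add_eq_le [DecidableEq R] (hψ : ψ.IsPrimitive) (P : Finset R) :
    (Fintype.card R : ℝ) * #{t ∈ P ×ˢ s ×ˢ s | f t.2.1 + f t.2.2 = t.1} ≤
      #P * (#s : ℝ) ^ 2 + ∑ u with u ≠ 0, ‖expSum ψ P id u‖ * ‖expSum ψ s f u‖ ^ 2 := by
  have hcount : (Fintype.card R : ℂ) * #{t ∈ P ×ˢ s ×ˢ s | f t.2.1 + f t.2.2 = t.1} =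
      ∑ u, conj (expSum ψ P id u) * expSum ψ s f u ^ 2 := by
    simp only [conj_expSum, sq, expSum_mul_expSum, sum_expSum _ _ hψ, id, neg_add_eq_zero]
    simp only [eq_comm]
  calc (Fintype.card R : ℝ) * #{t ∈ P ×ˢ s ×ˢ s | f t.2.1 + f t.2.2 = t.1}
      = ‖∑ u, conj (expSum ψ P id u) * expSum ψ s f u ^ 2‖ := by rw [← hcount]; simp
    _ ≤ ∑ u, ‖expSum ψ P id u‖ * ‖expSum ψ s f u‖ ^ 2 :=
        (norm_sum_le _ _).trans_eq <| sum_congr rfl fun u _ ↦ by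
          rw [norm_mul, norm_pow, RCLike.norm_conj]
    _ = _ := by
        rw [← add_sum_erase _ _ (mem_univ (0 : R)), filter_ne']
        simp [expSum_zero]

end ExponentialSums

section Annihilators

variable {R : Type*} [CommRing R] [Fintype R] [DecidableEq R]

/-- The cardinality of the annihilator of `u` in a finite ring. -/
def annCard (u : R) : ℕ := #{v : R | u * v = 0}

lemma card_filter_mul_eq_le_annCard (u b : R) (s : Finset R) :
    #{v ∈ s | u * v = b} ≤ annCard u := by
  obtain h | ⟨v₀, h₀⟩ := {v ∈ s | u * v = b}.eq_empty_or_nonempty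
  · simp [h]
  · refine card_le_card_of_injOn (· - v₀) (fun v hv ↦ ?_) sub_left_injective.injOn
    simp only [coe_filter, Set.mem_ofPred_eq, mem_filter] at hv h₀
    simp [mul_sub, hv.2, h₀.2]

lemma annCard_eq_card_torsionOf (u : R) : annCard u = Nat.card (Ideal.torsionOf R R u) := by
  rw [annCard, ← Fintype.card_subtype, ← Nat.card_eq_fintype_card]
  refine Nat.card_congr (Equiv.subtypeEquivRight fun v ↦ ?_)
  rw [Ideal.mem_torsionOf_iff, smul_eq_mul, mul_comm]

lemma annCard_mul_card_span_singleton (u : R) :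
    annCard u * Nat.card (Ideal.span {u}) = Nat.card R := by
  rw [annCard_eq_card_torsionOf, Submodule.card_eq_card_quotient_mul_card (Ideal.torsionOf R R u),
    Nat.card_congr (Ideal.quotTorsionOfEquivSpanSingleton R R u).toEquiv, mul_comm]

lemma annCard_mul_annCard_le [PreValuationRing R] {a b : R} (hab : a * b ≠ 0) :
    annCard a * annCard b ≤ annCard (a * b) := by
  have hdvd (t : R) (ht : a * t = 0) : ∃ s, b * s = t := by
    obtain ⟨s, hs | rfl⟩ := PreValuationRing.cond b t
    · exact ⟨s, hs⟩
    · rw [← mul_assoc, ht, zero_mul] at hab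
      exact absurd rfl hab
  choose! lift hlift using hdvd
  simp only [annCard, ← card_product]
  refine card_le_card_of_injOn (fun x ↦ lift x.1 + x.2) ?_ ?_
  · rintro ⟨t, w⟩ htw
    simp only [mem_coe, mem_product, mem_filter_univ] at htw ⊢
    rw [mul_assoc, mul_add, hlift t htw.1, htw.2, add_zero, htw.1]
  · rintro ⟨t, w⟩ htw ⟨t', w'⟩ htw' h
    simp only [mem_coe, mem_product, mem_filter_univ] at htw htw' h
    obtain rfl : t = t' := by
      simpa [mul_add, hlift, htw, htw'] using congrArg (b * ·) h
    simpa using h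

end Annihilators

section ChainRings

open IsLocalRing

lemma preValuationRing_of_isLocalRing_of_isBezout {R : Type*} [CommRing R] [IsLocalRing R]
    [IsBezout R] : PreValuationRing R := by
  refine PreValuationRing.iff_dvd_total.2 ⟨fun a b ↦ ?_⟩
  obtain ⟨a', ha⟩ := IsBezout.gcd_dvd_left a b
  obtain ⟨b', hb⟩ := IsBezout.gcd_dvd_right a b
  obtain ⟨x, y, hxy⟩ := IsBezout.gcd_eq_sum a b
  have hgcd : IsBezout.gcd a b * (1 - (x * a' + y * b')) = 0 := by
    linear_combination x * ha + y * hb - hxy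
  obtain hunit | hunit := isUnit_or_isUnit_one_sub_self (x * a' + y * b')
  · obtain hx | hy := isUnit_or_isUnit_of_isUnit_add hunit
    · left
      rw [ha, (isUnit_of_mul_isUnit_right hx).mul_right_dvd]
      exact IsBezout.gcd_dvd_right a b
    · right
      rw [hb, (isUnit_of_mul_isUnit_right hy).mul_right_dvd]
      exact IsBezout.gcd_dvd_left a b
  · left
    rw [hb, hunit.mul_left_eq_zero.1 hgcd, zero_mul]
    exact dvd_zero a

variable {R : Type*} [CommRing R]

lemma exists_ne_zero_forall_dvd [Finite R] [Nontrivial R] [PreValuationRing R] :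
    ∃ s : R, s ≠ 0 ∧ ∀ u : R, u ≠ 0 → u ∣ s := by
  obtain ⟨I, hI⟩ := IsAtomic.exists_atom (Ideal R)
  obtain ⟨s, hs, hs0⟩ := Submodule.exists_mem_ne_zero_of_ne_bot hI.1
  refine ⟨s, hs0, fun u hu ↦ Ideal.mem_span_singleton.1 ?_⟩
  have hu' : Ideal.span {u} ≠ ⊥ := by simpa using hu
  obtain h | h := (ValuationRing.le_total_ideal R).total I (Ideal.span {u})
  · exact h hs
  · exact (hI.le_iff_eq hu').1 h ▸ hs

lemma exists_addChar_isPrimitive [Finite R] [Nontrivial R] [PreValuationRing R] :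
    ∃ ψ : AddChar R ℂ, ψ.IsPrimitive := by
  obtain ⟨s, hs0, hs⟩ := exists_ne_zero_forall_dvd (R := R)
  obtain ⟨ψ, hψ⟩ := AddChar.exists_apply_ne_zero.2 hs0
  refine ⟨ψ, fun u hu h ↦ hψ ?_⟩
  obtain ⟨c, rfl⟩ := hs u hu
  rw [← AddChar.mulShift_apply, h, AddChar.one_apply]

lemma card_residueField_pos [Finite R] [IsLocalRing R] : 0 < Nat.card (ResidueField R) := by
  have : Finite (ResidueField R) := .of_surjective _ (residue_surjective (R := R))
  exact Nat.card_pos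

variable [Fintype R] [DecidableEq R]

lemma annCard_eq_card_residueField [IsLocalRing R] {z : R}
    (hz : maximalIdeal R = Ideal.span {z}) : annCard z = Nat.card (ResidueField R) := by
  have hquot := Submodule.card_eq_card_quotient_mul_card (maximalIdeal R)
  rw [← annCard_mul_card_span_singleton z, ← hz, mul_comm] at hquot
  exact Nat.eq_of_mul_eq_mul_left Nat.card_pos hquot

lemma card_residueField_mul_annCard_le [IsLocalRing R] {v : R} (hv : v ≠ 0) :
    Nat.card (ResidueField R) * annCard v ≤ Nat.card R := by
  have hle : Ideal.torsionOf R R v ≤ maximalIdeal R :=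
    le_maximalIdeal ((Ideal.torsionOf_eq_top_iff R v).not.2 hv)
  rw [Submodule.card_eq_card_quotient_mul_card (maximalIdeal R), mul_comm,
    annCard_eq_card_torsionOf]
  exact Nat.mul_le_mul_right _ (Nat.card_mono (Set.toFinite _) hle)

section MomentBound

variable {z : R}

lemma card_residueField_pow_mul_sum_annCard_pow_of_mul_eq_zero_le [IsLocalRing R]
    (hz : maximalIdeal R = Ideal.span {z}) (k : ℕ) :
    Nat.card (ResidueField R) ^ k * ∑ v with v ≠ 0 ∧ z * v = 0, annCard v ^ (k + 1) ≤
      Nat.card R ^ (k + 1) := by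
  have hzq : annCard z = Nat.card (ResidueField R) := annCard_eq_card_residueField hz
  set q := Nat.card (ResidueField R)
  have hcard : #{v | v ≠ 0 ∧ z * v = 0} ≤ q := by
    rw [← hzq, annCard]
    exact card_le_card (monotone_filter_right _ fun v _ hv ↦ hv.2)
  refine Nat.le_of_mul_le_mul_left ?_ (card_residueField_pos (R := R))
  calc q * (q ^ k * ∑ v with v ≠ 0 ∧ z * v = 0, annCard v ^ (k + 1))
      = ∑ v with v ≠ 0 ∧ z * v = 0, (q * annCard v) ^ (k + 1) := by
        rw [← mul_assoc, ← pow_succ', mul_sum]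
        simp only [mul_pow]
    _ ≤ #{v | v ≠ 0 ∧ z * v = 0} • Nat.card R ^ (k + 1) :=
        sum_le_card_nsmul _ _ _ fun v hv ↦
          Nat.pow_le_pow_left (card_residueField_mul_annCard_le (mem_filter_univ v |>.1 hv).1) _
    _ ≤ q * Nat.card R ^ (k + 1) := Nat.mul_le_mul_right _ hcard

lemma card_residueField_pow_mul_sum_annCard_pow_of_mul_ne_zero_le [Nontrivial R]
    [PreValuationRing R] (hz : maximalIdeal R = Ideal.span {z}) (k : ℕ) :
    Nat.card (ResidueField R) ^ k * ∑ v with z * v ≠ 0, annCard v ^ (k + 1) ≤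
      ∑ u : R with u ≠ 0, annCard u ^ (k + 1) := by
  have hzq : annCard z = Nat.card (ResidueField R) := annCard_eq_card_residueField hz
  set q := Nat.card (ResidueField R)
  refine Nat.le_of_mul_le_mul_left ?_ (card_residueField_pos (R := R))
  calc q * (q ^ k * ∑ v with z * v ≠ 0, annCard v ^ (k + 1))
      = ∑ v with z * v ≠ 0, (annCard z * annCard v) ^ (k + 1) := by
        rw [← mul_assoc, ← pow_succ', mul_sum]
        simp only [mul_pow, hzq]
    _ ≤ ∑ v with z * v ≠ 0, annCard (z * v) ^ (k + 1) :=
        sum_le_sum fun v hv ↦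
          Nat.pow_le_pow_left (annCard_mul_annCard_le (mem_filter_univ v |>.1 hv)) _
    _ = ∑ u : R with u ≠ 0, ∑ v with z * v ≠ 0 ∧ z * v = u, annCard u ^ (k + 1) := by
        simp only [← filter_filter (fun v ↦ z * v ≠ 0)]
        exact (sum_fiberwise_of_maps_to' (g := (z * ·)) (fun v hv ↦ by simpa using hv)
          (fun u ↦ annCard u ^ (k + 1))).symm
    _ ≤ ∑ u : R with u ≠ 0, q * annCard u ^ (k + 1) := by
        refine sum_le_sum fun u _ ↦ ?_
        rw [sum_const, smul_eq_mul, ← hzq, ← filter_filter]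
        exact Nat.mul_le_mul_right _ (card_filter_mul_eq_le_annCard z u _)
    _ = q * ∑ u : R with u ≠ 0, annCard u ^ (k + 1) := by rw [mul_sum]

lemma card_residueField_pow_mul_sum_annCard_pow_le [Nontrivial R] [PreValuationRing R]
    (hz : maximalIdeal R = Ideal.span {z}) (k : ℕ) :
    Nat.card (ResidueField R) ^ k * ∑ u : R with u ≠ 0, annCard u ^ (k + 1) ≤
      ∑ u : R with u ≠ 0, annCard u ^ (k + 1) + Nat.card R ^ (k + 1) := by
  have hsplit : ∑ u : R with u ≠ 0, annCard u ^ (k + 1) =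
      ∑ v with z * v ≠ 0, annCard v ^ (k + 1) +
        ∑ v with v ≠ 0 ∧ z * v = 0, annCard v ^ (k + 1) := by
    rw [← sum_filter_not_add_sum_filter _ (fun v ↦ z * v = 0), filter_filter, filter_filter]
    congr 2
    ext v
    simpa using right_ne_zero_of_mul
  conv_lhs => rw [hsplit, mul_add]
  exact Nat.add_le_add (card_residueField_pow_mul_sum_annCard_pow_of_mul_ne_zero_le hz k)
    (card_residueField_pow_mul_sum_annCard_pow_of_mul_eq_zero_le hz k)

end MomentBound

end ChainRings

section SumProduct

variable {R : Type*} [CommRing R] [DecidableEq R]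

lemma card_pow_six_le_card_mul_add_eq (A : Finset R) :
    #A ^ 6 ≤ #{t ∈ (A * A + A * A) ×ˢ (A ×ˢ (A - A) ×ˢ A) ×ˢ (A ×ˢ (A - A) ×ˢ A) |
      t.2.1.1 * (t.2.1.2.1 + t.2.1.2.2) + t.2.2.1 * (t.2.2.2.1 + t.2.2.2.2) = t.1} := by
  have hcard : #((A ×ˢ A ×ˢ A) ×ˢ A ×ˢ A ×ˢ A) = #A ^ 6 := by
    simp only [card_product]
    ring
  rw [← hcard]
  refine card_le_card_of_injOn (fun ((b, e, a), (b', e', a')) ↦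
    (b * e + b' * e', (b, e - a, a), (b', e' - a', a'))) ?_ ?_
  · rintro ⟨⟨b, e, a⟩, b', e', a'⟩ h
    simp only [mem_coe, mem_product] at h
    obtain ⟨⟨hb, he, ha⟩, hb', he', ha'⟩ := h
    simp only [mem_coe, mem_filter, mem_product, sub_add_cancel, and_true]
    exact ⟨add_mem_add (mul_mem_mul hb he) (mul_mem_mul hb' he'),
      ⟨hb, sub_mem_sub he ha, ha⟩, hb', sub_mem_sub he' ha', ha'⟩
  · rintro ⟨⟨b, e, a⟩, b', e', a'⟩ - ⟨⟨c, g, d⟩, c', g', d'⟩ - h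
    simp only [Prod.mk.injEq] at h ⊢
    obtain ⟨-, ⟨rfl, he, rfl⟩, rfl, he', rfl⟩ := h
    exact ⟨⟨rfl, sub_left_injective he, rfl⟩, rfl, sub_left_injective he', rfl⟩

variable [Fintype R] {ψ : AddChar R ℂ}

lemma sum_norm_expSum_mul_sq_le (hψ : ψ.IsPrimitive) (X : Finset R) (u : R) :
    ∑ b, ‖expSum ψ X (u * ·) b‖ ^ 2 ≤ Fintype.card R * #X * annCard u := by
  have hpairs : #{x ∈ X ×ˢ X | u * x.1 = u * x.2} ≤ #X * annCard u := by
    calc #{x ∈ X ×ˢ X | u * x.1 = u * x.2}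
        = ∑ x ∈ X, #{y ∈ X | u * y = u * x} := by
          simp only [card_filter, sum_product, eq_comm]
      _ ≤ #X * annCard u :=
          sum_le_card_nsmul _ _ _ fun x _ ↦ card_filter_mul_eq_le_annCard u (u * x) X
  rw [sum_norm_expSum_sq _ _ hψ, mul_assoc]
  gcongr
  exact_mod_cast hpairs

lemma norm_expSum_mul_add_sq_le (hψ : ψ.IsPrimitive) (B C D : Finset R) (u : R) :
    ‖expSum ψ (B ×ˢ C ×ˢ D) (fun t ↦ t.1 * (t.2.1 + t.2.2)) u‖ ^ 2 ≤
      (Fintype.card R : ℝ) ^ 2 * #C * #D * (annCard u : ℝ) ^ 2 := by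
  rw [expSum_mul_add]
  calc ‖∑ b ∈ B, expSum ψ C (u * ·) b * expSum ψ D (u * ·) b‖ ^ 2
      ≤ (∑ b, ‖expSum ψ C (u * ·) b‖ * ‖expSum ψ D (u * ·) b‖) ^ 2 := by
        gcongr
        refine (norm_sum_le _ _).trans ?_
        simp only [norm_mul]
        exact sum_le_univ_sum_of_nonneg fun b ↦ by positivity
    _ ≤ (∑ b, ‖expSum ψ C (u * ·) b‖ ^ 2) * ∑ b, ‖expSum ψ D (u * ·) b‖ ^ 2 :=
        sum_mul_sq_le_sq_mul_sq _ _ _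
    _ ≤ (Fintype.card R * #C * annCard u) * (Fintype.card R * #D * annCard u) := by
        gcongr <;> exact sum_norm_expSum_mul_sq_le hψ _ u
    _ = _ := by ring

lemma sum_norm_expSum_id_mul_annCard_sq_le (hψ : ψ.IsPrimitive) (P : Finset R) :
    ∑ u with u ≠ 0, ‖expSum ψ P id u‖ * (annCard u : ℝ) ^ 2 ≤
      √(Fintype.card R * #P) * √(∑ u : R with u ≠ 0, (annCard u : ℝ) ^ 4) := by
  refine (Real.sum_mul_le_sqrt_mul_sqrt _ _ _).trans ?_
  simp only [← pow_mul, ← sum_norm_expSum_id_sq hψ P]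
  gcongr
  exact subset_univ _

lemma card_mul_card_pow_six_le (hψ : ψ.IsPrimitive) (A : Finset R) :
    (Fintype.card R : ℝ) * (#A : ℝ) ^ 6 ≤
      #(A * A + A * A) * (#(A - A) : ℝ) ^ 2 * (#A : ℝ) ^ 4 +
        (Fintype.card R : ℝ) ^ 2 * #(A - A) * #A *
          (√(Fintype.card R * #(A * A + A * A)) *
            √(∑ u : R with u ≠ 0, (annCard u : ℝ) ^ 4)) := by
  set P := A * A + A * A
  set D := A - A
  let f (t : R × R × R) : R := t.1 * (t.2.1 + t.2.2)
  let S := A ×ˢ D ×ˢ A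
  calc (Fintype.card R : ℝ) * (#A : ℝ) ^ 6
      ≤ Fintype.card R * #{t ∈ P ×ˢ S ×ˢ S | f t.2.1 + f t.2.2 = t.1} := by
        gcongr
        exact_mod_cast card_pow_six_le_card_mul_add_eq A
    _ ≤ #P * (#S : ℝ) ^ 2 + ∑ u with u ≠ 0, ‖expSum ψ P id u‖ * ‖expSum ψ S f u‖ ^ 2 :=
        card_mul_card_add_eq_le S f hψ P
    _ ≤ #P * (#S : ℝ) ^ 2 + ∑ u with u ≠ 0, ‖expSum ψ P id u‖ *
          ((Fintype.card R : ℝ) ^ 2 * #D * #A * (annCard u : ℝ) ^ 2) := by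
        gcongr with u
        exact norm_expSum_mul_add_sq_le hψ A D A u
    _ = #P * (#D : ℝ) ^ 2 * (#A : ℝ) ^ 4 + (Fintype.card R : ℝ) ^ 2 * #D * #A *
          ∑ u with u ≠ 0, ‖expSum ψ P id u‖ * (annCard u : ℝ) ^ 2 := by
        simp only [S, card_product, mul_sum]
        push_cast
        congr 1
        · ring
        · exact sum_congr rfl fun u _ ↦ by ring
    _ ≤ _ := by
        gcongr
        exact sum_norm_expSum_id_mul_annCard_sq_le hψ P

end SumProduct

section Numerics

variable {n N D P E c q M : ℝ}

lemma mul_pow_eight_le_of_two_mul_lt (hn : 0 < n) (hN : 0 < N) (hP : 0 ≤ P) (hE : 0 ≤ E)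
    (hc : 0 ≤ c) (hcE : c * E ≤ n ^ 4) (hPD : 2 * (P * D ^ 2) < n * N ^ 2)
    (h : n * N ^ 6 ≤ P * D ^ 2 * N ^ 4 + n ^ 2 * D * N * (√(n * P) * √E)) :
    c * N ^ 8 ≤ 2 * n ^ 8 := by
  have hhalf : n * N ^ 6 ≤ 2 * (n ^ 2 * D * N * (√(n * P) * √E)) := by
    have : 2 * (P * D ^ 2) * N ^ 4 ≤ n * N ^ 2 * N ^ 4 := by gcongr
    linarith
  have hsq : (n * N ^ 6) ^ 2 ≤ 4 * (n ^ 5 * N ^ 2 * (P * D ^ 2) * E) := by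
    calc (n * N ^ 6) ^ 2 ≤ (2 * (n ^ 2 * D * N * (√(n * P) * √E))) ^ 2 := by gcongr
      _ = 4 * ((n ^ 2 * D * N) ^ 2 * (√(n * P) ^ 2 * √E ^ 2)) := by ring
      _ = 4 * (n ^ 5 * N ^ 2 * (P * D ^ 2) * E) := by
        rw [Real.sq_sqrt (by positivity), Real.sq_sqrt hE]
        ring
  refine le_of_mul_le_mul_left ?_ (by positivity : 0 < n ^ 2 * N ^ 4)
  calc n ^ 2 * N ^ 4 * (c * N ^ 8) = c * (n * N ^ 6) ^ 2 := by ring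
    _ ≤ c * (4 * (n ^ 5 * N ^ 2 * (P * D ^ 2) * E)) := by gcongr
    _ = 2 * n ^ 5 * N ^ 2 * (2 * (P * D ^ 2)) * (c * E) := by ring
    _ ≤ 2 * n ^ 5 * N ^ 2 * (n * N ^ 2) * n ^ 4 := by gcongr
    _ = n ^ 2 * N ^ 4 * (2 * n ^ 8) := by ring

lemma lt_nine_of_mul_pow_eight_le (hN : 0 < N) (hn : 0 ≤ n) (hq : 1 ≤ q)
    (hnN : n ^ 3 ≤ q * N ^ 3) (h : (q ^ 3 - 1) * N ^ 8 ≤ 2 * n ^ 8) : q < 9 := by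
  have hq3 : 0 ≤ q ^ 3 - 1 := sub_nonneg.2 (one_le_pow₀ hq)
  have hcube : (q ^ 3 - 1) ^ 3 ≤ 8 * q ^ 8 := by
    refine le_of_mul_le_mul_right ?_ (by positivity : 0 < N ^ 24)
    calc (q ^ 3 - 1) ^ 3 * N ^ 24 = ((q ^ 3 - 1) * N ^ 8) ^ 3 := by ring
      _ ≤ (2 * n ^ 8) ^ 3 := by gcongr
      _ = 8 * (n ^ 3) ^ 8 := by ring
      _ ≤ 8 * (q * N ^ 3) ^ 8 := by gcongr
      _ = 8 * q ^ 8 * N ^ 24 := by ring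
  by_contra! hq9
  have hq9' : 9 * q ^ 8 ≤ q ^ 9 := by
    calc 9 * q ^ 8 ≤ q * q ^ 8 := by gcongr
      _ = q ^ 9 := by ring
  have hq8 : 9 * q ^ 6 ≤ q ^ 8 := by
    calc 9 * q ^ 6 ≤ q ^ 2 * q ^ 6 := by gcongr; nlinarith
      _ = q ^ 8 := by ring
  have hq6 : 0 < q ^ 6 := by positivity
  nlinarith

lemma two_rpow_mul_rpow_mul_rpow_le (hn : 0 ≤ n) (hN : 0 ≤ N) (hM : 0 ≤ M)
    (h : n * N ^ 2 ≤ 2 * M ^ 3) :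
    (2 : ℝ) ^ (-(1 / 3) : ℝ) * N ^ (2 / 3 : ℝ) * n ^ (1 / 3 : ℝ) ≤ M := by
  have hroot : (2 : ℝ) ^ (-(1 / 3) : ℝ) * N ^ (2 / 3 : ℝ) * n ^ (1 / 3 : ℝ) =
      (2⁻¹ * N ^ 2 * n) ^ (3 : ℝ)⁻¹ := by
    rw [Real.mul_rpow (by positivity) hn, Real.mul_rpow (by norm_num) (by positivity),
      Real.inv_rpow (by norm_num), ← Real.rpow_neg (by norm_num), ← Real.rpow_natCast N 2,
      ← Real.rpow_mul hN]
    norm_num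
  rw [hroot, Real.rpow_inv_le_iff_of_pos (by positivity) hM (by norm_num)]
  norm_cast
  linarith

end Numerics

section Main

open IsLocalRing

variable {R : Type*} [CommRing R] [Fintype R] [DecidableEq R] [IsLocalRing R]
  [IsPrincipalIdealRing R] {A : Finset R}

lemma card_mul_card_sq_le_of_nine_le (hq : 9 ≤ Nat.card (ResidueField R)) (hAne : A.Nonempty)
    (hA : Fintype.card R ^ 3 ≤ Nat.card (ResidueField R) * #A ^ 3) :
    Fintype.card R * #A ^ 2 ≤ 2 * (#(A * A + A * A) * #(A - A) ^ 2) := by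
  have := preValuationRing_of_isLocalRing_of_isBezout (R := R)
  obtain ⟨ψ, hψ⟩ := exists_addChar_isPrimitive (R := R)
  obtain ⟨z, hz⟩ := IsPrincipalIdealRing.principal (maximalIdeal R)
  have hmoment := card_residueField_pow_mul_sum_annCard_pow_le hz 3
  set q := Nat.card (ResidueField R)
  have hE : ((q : ℝ) ^ 3 - 1) * ∑ u : R with u ≠ 0, (annCard u : ℝ) ^ 4 ≤
      (Fintype.card R : ℝ) ^ 4 := by
    rw [sub_one_mul, sub_le_iff_le_add', ← Nat.card_eq_fintype_card]
    exact_mod_cast hmoment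
  have hq1 : (1 : ℝ) ≤ q := by exact_mod_cast hq.trans' (by norm_num)
  have hNpos : (0 : ℝ) < #A := by exact_mod_cast hAne.card_pos
  by_contra! hlt
  have hbound : ((q : ℝ) ^ 3 - 1) * (#A : ℝ) ^ 8 ≤ 2 * (Fintype.card R : ℝ) ^ 8 :=
    mul_pow_eight_le_of_two_mul_lt (by exact_mod_cast Fintype.card_pos) hNpos
      (Nat.cast_nonneg _) (sum_nonneg fun _ _ ↦ by positivity) (sub_nonneg.2 (one_le_pow₀ hq1)) hE
      (by exact_mod_cast hlt) (card_mul_card_pow_six_le hψ A)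
  have hA' : (Fintype.card R : ℝ) ^ 3 ≤ q * (#A : ℝ) ^ 3 := by exact_mod_cast hA
  have hq9 : (q : ℝ) < 9 :=
    lt_nine_of_mul_pow_eight_le hNpos (Nat.cast_nonneg _) hq1 hA' hbound
  exact hq.not_gt (by exact_mod_cast hq9)

lemma card_mul_card_sq_le_two_mul_max_pow_three
    (hA : Fintype.card R ^ 3 ≤ Nat.card (ResidueField R) * #A ^ 3) :
    Fintype.card R * #A ^ 2 ≤ 2 * max #(A - A) #(A * A + A * A) ^ 3 := by
  obtain rfl | hAne := A.eq_empty_or_nonempty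
  · simp
  set M := max #(A - A) #(A * A + A * A)
  have hD : #(A - A) ≤ M := le_max_left _ _
  have hP : #(A * A + A * A) ≤ M := le_max_right _ _
  obtain hq | hq := le_or_gt 9 (Nat.card (ResidueField R))
  · calc Fintype.card R * #A ^ 2 ≤ 2 * (#(A * A + A * A) * #(A - A) ^ 2) :=
          card_mul_card_sq_le_of_nine_le hq hAne hA
      _ ≤ 2 * (M * M ^ 2) := by gcongr
      _ = 2 * M ^ 3 := by ring
  · have hAM : #A ≤ M := (card_le_card_sub_right hAne).trans hD
    have hRA : Fintype.card R ≤ 2 * #A := by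
      refine le_of_pow_le_pow_left₀ three_ne_zero (Nat.zero_le _) (hA.trans ?_)
      rw [mul_pow]
      exact Nat.mul_le_mul_right _ (by omega)
    calc Fintype.card R * #A ^ 2 ≤ 2 * M * M ^ 2 := by gcongr; exact hRA.trans (by gcongr)
      _ = 2 * M ^ 3 := by ring

end Main

theorem stmt_5_general {R : Type*} [CommRing R] [Fintype R] [DecidableEq R]
    [IsLocalRing R] [IsPrincipalIdealRing R]
    (q r : ℕ)
    (hq : Nat.card (IsLocalRing.ResidueField R) = q)
    (hcard : Fintype.card R = q ^ r)
    (A : Finset R)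
    (hA : q ^ (3 * r - 1) ≤ #A ^ 3) :
    (2 : ℝ) ^ (-(1 / 3) : ℝ) * (#A : ℝ) ^ (2 / 3 : ℝ) * (q : ℝ) ^ (r / 3 : ℝ) ≤
      max (#(A - A) : ℝ) (#(A * A + A * A) : ℝ) := by
  have hqpos : 0 < q := hq ▸ card_residueField_pos
  have hcube : Fintype.card R ^ 3 ≤ Nat.card (IsLocalRing.ResidueField R) * #A ^ 3 := by
    calc Fintype.card R ^ 3 = q ^ (3 * r) := by rw [hcard, ← pow_mul, mul_comm]
      _ ≤ q ^ (3 * r - 1 + 1) := Nat.pow_le_pow_right hqpos (by omega)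
      _ = q * q ^ (3 * r - 1) := pow_succ' _ _
      _ ≤ Nat.card (IsLocalRing.ResidueField R) * #A ^ 3 := by
        rw [hq]
        exact Nat.mul_le_mul_left _ hA
  have hroot : (q : ℝ) ^ (r / 3 : ℝ) = (Fintype.card R : ℝ) ^ (1 / 3 : ℝ) := by
    rw [hcard, Nat.cast_pow, ← Real.rpow_natCast, ← Real.rpow_mul (by positivity), mul_one_div]
  rw [hroot]
  exact two_rpow_mul_rpow_mul_rpow_le (by positivity) (by positivity) (by positivity)
    (by exact_mod_cast card_mul_card_sq_le_two_mul_max_pow_three hcube)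

/-- Let `R` be a finite valuation ring of order `q ^ r` with `q` odd,
and let `A ⊆ R` with `|A|³ ≥ q^(3r-1)`. Then
`max {|A−A|, |A·A + A·A|} ≥ 2^(-1/3) * |A|^(2/3) * q^(r/3)`. -/
theorem stmt_5 {R : Type*} [CommRing R] [Fintype R] [DecidableEq R] [Nontrivial R]
    [IsLocalRing R] [IsPrincipalIdealRing R]
    (q r : ℕ)
    (hq : Nat.card (IsLocalRing.ResidueField R) = q)
    (hqodd : Odd q)
    (hnil : IsLocalRing.maximalIdeal R ^ r = ⊥)
    (hnil' : ∀ k < r, IsLocalRing.maximalIdeal R ^ k ≠ ⊥)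
    (hcard : Fintype.card R = q ^ r)
    (A : Finset R)
    (hA : q ^ (3 * r - 1) ≤ A.card ^ 3) :
    (2 : ℝ) ^ (-(1 / 3) : ℝ) * (A.card : ℝ) ^ ((2 : ℝ) / 3) * (q : ℝ) ^ ((r : ℝ) / 3) ≤
      max (((A - A).card : ℝ)) (((A * A + A * A).card : ℝ)) :=
  stmt_5_general q r hq hcard A hA
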